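/- Let q be a real number with q > 1 and let m ≥ 1 be an integer. Then the sum, over all integer partitions λ of 2m in which every even part occurs with even multiplicity, of (1 - q^{-λ'_1}) / ( q^{( Σ_i (λ'_i)^2 - o(λ) )/2} · Π_i (1/q^2; 1/q^2)_{⌊m_i(λ)/2⌋} ) equals (1/q^m) · Σ_{i=1}^{m} (-1)^{i-1} / ( q^{i(i-1)} (1/q^2; 1/q^2)_{m-i} ). -/

import Mathlib

/-- The q-Pochhammer symbol `(a; Q)_n = ∏_{j=0}^{n-1} (1 - a Q^j)` over the reals. -/
noncomputable def qPoch (a Q : ℝ) (n : ℕ) : ℝ := ∏ j ∈ Finset.range n, (1 - a * Q ^ j)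

/-- `λ'_i`, the size of the `i`-th column of the Young diagram of `λ`, i.e. the number of
parts of `λ` of size at least `i` (equivalently `∑_{j ≥ i} m_j(λ)`). -/
def colLen {n : ℕ} (lam : Nat.Partition n) (i : ℕ) : ℕ :=
  (lam.parts.filter (fun j => i ≤ j)).card

/-- `o(λ)`, the number of odd parts of `λ`. -/
def numOddParts {n : ℕ} (lam : Nat.Partition n) : ℕ :=
  (lam.parts.filter (fun j => Odd j)).card

/-!
Work with `p = 1/q` and `Q = p²`. Removing the first column of the diagram of `λ` lowers every part
by one, so it exchanges the partitions whose even parts have even multiplicity with those whose odd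
parts have even multiplicity (the Jordan types of nilpotent orthogonal and symplectic matrices).
This gives a recursion between the two weighted sums over the partitions of `n` with `a` parts; the
four cases according to the parities have closed forms with Gaussian binomial coefficients, by the
`q`-Vandermonde convolution. Summing `1 - p^a` times the closed form over `a` leaves
`∑ k, Q^(k(k+1)) [n, k] / (Q; Q)_k`. This equals the alternating sum because both satisfy
`G (n + 1) = (1 - Q^(n+1)) G n + Q^(n+1) / (Q; Q)_{n+1}`.
-/

section Preliminaries

@[to_additive]
theorem prod_Icc_eq_prod_range {M : Type*} [CommMonoid M] (f : ℕ → M) (n : ℕ) :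
    ∏ i ∈ Finset.Icc 1 n, f i = ∏ i ∈ Finset.range n, f (i + 1) := by
  rw [Finset.range_eq_Ico, Finset.prod_Ico_add' f 0 n 1, zero_add, Finset.Ico_add_one_right_eq_Icc]

theorem sum_range_two_mul {M : Type*} [AddCommMonoid M] (f : ℕ → M) (k : ℕ) :
    ∑ i ∈ Finset.range (2 * k), f i = ∑ j ∈ Finset.range k, (f (2 * j) + f (2 * j + 1)) := by
  induction k with
  | zero => rfl
  | succ k ih =>
    rw [Finset.sum_range_succ, ← ih, mul_add_one, Finset.sum_range_succ, Finset.sum_range_succ,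
      add_assoc]

theorem pow_choose_two_two_mul_add_one {M : Type*} [Monoid M] (p : M) (k : ℕ) :
    p ^ (2 * k + 1).choose 2 = p ^ k * (p ^ 2) ^ (k * k) := by
  rw [← pow_mul, ← pow_add, Nat.choose_two_right, Nat.add_sub_cancel,
    show (2 * k + 1) * (2 * k) = 2 * (k + 2 * (k * k)) by ring, Nat.mul_div_cancel_left _ two_pos]

theorem pow_choose_two_two_mul_add_two {M : Type*} [Monoid M] (p : M) (k : ℕ) :
    p ^ (2 * k + 2).choose 2 = p ^ (k + 1) * (p ^ 2) ^ (k * (k + 1)) := by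
  rw [← pow_mul, ← pow_add, Nat.choose_two_right, Nat.add_sub_cancel_right (m := 1),
    show (2 * k + 2) * (2 * k + 1) = 2 * (k + 1 + 2 * (k * (k + 1))) by ring,
    Nat.mul_div_cancel_left _ two_pos]

end Preliminaries

section GaussBinom

/-- The Gaussian binomial coefficient `[n, k]_Q`, defined by the `q`-Pascal rule so that it makes
sense for every `Q`, roots of unity included. -/
def gaussBinom {R : Type*} [Semiring R] (Q : R) : ℕ → ℕ → R
  | _, 0 => 1
  | 0, _ + 1 => 0
  | n + 1, k + 1 => gaussBinom Q n k + Q ^ (k + 1) * gaussBinom Q n (k + 1)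

section Semiring

variable {R : Type*} [Semiring R] (Q : R)

theorem gaussBinom_zero_right (n : ℕ) : gaussBinom Q n 0 = 1 := by
  cases n <;> rfl

theorem gaussBinom_succ_succ (n k : ℕ) :
    gaussBinom Q (n + 1) (k + 1) = gaussBinom Q n k + Q ^ (k + 1) * gaussBinom Q n (k + 1) :=
  rfl

theorem gaussBinom_eq_zero_of_lt {n k : ℕ} (h : n < k) : gaussBinom Q n k = 0 := by
  induction n generalizing k with
  | zero => obtain _ | k := k <;> [omega; rfl]
  | succ n ih =>
    obtain _ | k := k
    · omega
    · rw [gaussBinom_succ_succ, ih (by omega), ih (by omega), mul_zero, add_zero]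

theorem gaussBinom_self (n : ℕ) : gaussBinom Q n n = 1 := by
  induction n with
  | zero => rfl
  | succ n ih =>
    rw [gaussBinom_succ_succ, ih, gaussBinom_eq_zero_of_lt Q n.lt_succ_self, mul_zero, add_zero]

end Semiring

theorem gaussBinom_succ_succ' {R : Type*} [CommSemiring R] (Q : R) (n k : ℕ) :
    gaussBinom Q (n + 1) (k + 1) = Q ^ (n - k) * gaussBinom Q n k + gaussBinom Q n (k + 1) := by
  induction n generalizing k with
  | zero => cases k <;> simp [gaussBinom]
  | succ n ih =>
    obtain _ | k := k
    · conv_lhs => rw [gaussBinom_succ_succ, ih]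
      conv_rhs => rw [gaussBinom_succ_succ]
      simp only [gaussBinom_zero_right, zero_add, tsub_zero]
      ring
    · conv_lhs => rw [gaussBinom_succ_succ, ih, ih]
      conv_rhs => rw [gaussBinom_succ_succ Q n, gaussBinom_succ_succ Q n]
      obtain hnk | ⟨d, rfl⟩ := (lt_or_ge n (k + 1)).imp id Nat.exists_eq_add_of_le
      · rw [gaussBinom_eq_zero_of_lt Q hnk]
        simp only [Nat.add_sub_add_right]
        ring
      · rw [show k + 1 + d + 1 - (k + 1) = d + 1 by omega, show k + 1 + d - k = d + 1 by omega,
          Nat.add_sub_cancel_left]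
        ring

variable {R : Type*} [CommRing R] (Q : R)

theorem one_sub_pow_mul_gaussBinom {n k : ℕ} (h : k ≤ n) :
    (1 - Q ^ (n + 1)) * gaussBinom Q n k = (1 - Q ^ (n + 1 - k)) * gaussBinom Q (n + 1) k := by
  obtain _ | k := k
  · simp [gaussBinom_zero_right]
  · have hpow : Q ^ (n - k) * Q ^ (k + 1) = Q ^ (n + 1) := by
      rw [← pow_add]; congr 1; omega
    rw [Nat.add_sub_add_right]
    linear_combination Q ^ (n - k) * gaussBinom_succ_succ Q n k - gaussBinom_succ_succ' Q n k
      + gaussBinom Q n (k + 1) * hpow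

end GaussBinom

section QPoch

theorem qPoch_zero (a Q : ℝ) : qPoch a Q 0 = 1 := by
  simp [qPoch]

theorem qPoch_self_succ (Q : ℝ) (n : ℕ) :
    qPoch Q Q (n + 1) = qPoch Q Q n * (1 - Q ^ (n + 1)) := by
  rw [qPoch, Finset.prod_range_succ, ← pow_succ', qPoch]

theorem gaussBinom_mul_qPoch_mul_qPoch (Q : ℝ) (k l : ℕ) :
    gaussBinom Q (k + l) k * (qPoch Q Q k * qPoch Q Q l) = qPoch Q Q (k + l) := by
  induction l with
  | zero => rw [add_zero, gaussBinom_self, qPoch_zero, one_mul, mul_one]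
  | succ l ih =>
    have h := one_sub_pow_mul_gaussBinom Q (Nat.le_add_right k l)
    rw [add_assoc, Nat.add_sub_cancel_left] at h
    rw [← add_assoc, qPoch_self_succ, qPoch_self_succ, ← ih]
    linear_combination -(qPoch Q Q k * qPoch Q Q l) * h

theorem qPoch_self_ne_zero {Q : ℝ} (hQ : |Q| ≠ 1) (n : ℕ) : qPoch Q Q n ≠ 0 := by
  refine Finset.prod_ne_zero_iff.2 fun j _ ↦ sub_ne_zero.2 fun h ↦ hQ ?_
  rw [← pow_succ'] at h
  rw [← pow_eq_one_iff_of_nonneg (abs_nonneg Q) j.succ_ne_zero, ← abs_pow, ← h, abs_one]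

theorem inv_qPoch_self {Q : ℝ} (hQ : |Q| ≠ 1) (n : ℕ) :
    (qPoch Q Q n)⁻¹ = (1 - Q ^ (n + 1)) * (qPoch Q Q (n + 1))⁻¹ := by
  have h := qPoch_self_ne_zero hQ (n + 1)
  rw [qPoch_self_succ] at h ⊢
  rw [mul_inv, mul_left_comm, mul_inv_cancel₀ (right_ne_zero_of_mul h), mul_one]

end QPoch

section SumIdentities

theorem sum_gaussBinom_succ_mul {R : Type*} [CommSemiring R] (Q : R) (f : ℕ → R) (n a r : ℕ) :
    ∑ j ∈ Finset.range (r + 1), Q ^ (j * (j + a)) * gaussBinom Q (n + 1) j * f j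
      = ∑ j ∈ Finset.range (r + 1), Q ^ (j * (j + a)) * gaussBinom Q n j * f j
        + Q ^ (n + a + 1) *
          ∑ j ∈ Finset.range r, Q ^ (j * (j + (a + 1))) * gaussBinom Q n j * f (j + 1) := by
  rw [Finset.sum_range_succ', Finset.sum_range_succ', Finset.mul_sum, add_right_comm,
    ← Finset.sum_add_distrib, gaussBinom_zero_right, gaussBinom_zero_right]
  congr 1
  refine Finset.sum_congr rfl fun j _ ↦ ?_
  rw [gaussBinom_succ_succ']
  obtain hjn | ⟨d, rfl⟩ := (lt_or_ge n j).imp id Nat.exists_eq_add_of_le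
  · rw [gaussBinom_eq_zero_of_lt Q hjn]
    ring
  · rw [Nat.add_sub_cancel_left]
    ring

theorem sum_gaussBinom_zero_mul {R : Type*} [Semiring R] (Q : R) (f : ℕ → R) (a r : ℕ) :
    ∑ j ∈ Finset.range (r + 1), Q ^ (j * (j + a)) * gaussBinom Q 0 j * f j = f 0 := by
  rw [Finset.sum_range_succ', Finset.sum_eq_zero fun j _ ↦ by
    rw [gaussBinom_eq_zero_of_lt Q j.succ_pos, mul_zero, zero_mul]]
  simp [gaussBinom_zero_right]

/-- The `q`-Vandermonde convolution `∑ Q^(j(j+a)) [n, j] [k+a, k-j] = [n+k+a, k]`, divided by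
`(Q; Q)_{k+a}`. -/
theorem sum_gaussBinom_mul_inv_qPoch_mul_inv_qPoch {Q : ℝ} (hQ : |Q| ≠ 1) (n k a : ℕ) :
    ∑ j ∈ Finset.range (k + 1), Q ^ (j * (j + a)) * gaussBinom Q n j *
        ((qPoch Q Q (j + a))⁻¹ * (qPoch Q Q (k - j))⁻¹)
      = gaussBinom Q (n + (k + a)) k * (qPoch Q Q (k + a))⁻¹ := by
  induction n generalizing k a with
  | zero =>
    rw [sum_gaussBinom_zero_mul Q fun j ↦ (qPoch Q Q (j + a))⁻¹ * (qPoch Q Q (k - j))⁻¹,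
      zero_add, zero_add, tsub_zero, mul_comm, ← mul_inv,
      eq_mul_inv_iff_mul_eq₀ (qPoch_self_ne_zero hQ _), ← gaussBinom_mul_qPoch_mul_qPoch]
    field_simp [qPoch_self_ne_zero hQ]
  | succ n ih =>
    rw [sum_gaussBinom_succ_mul Q fun j ↦ (qPoch Q Q (j + a))⁻¹ * (qPoch Q Q (k - j))⁻¹, ih]
    obtain _ | k := k
    · simp [gaussBinom_zero_right]
    · have hshift : ∀ j, (qPoch Q Q (j + 1 + a))⁻¹ * (qPoch Q Q (k + 1 - (j + 1)))⁻¹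
          = (qPoch Q Q (j + (a + 1)))⁻¹ * (qPoch Q Q (k - j))⁻¹ := fun j ↦ by
        rw [Nat.add_sub_add_right, add_right_comm, add_assoc]
      simp only [hshift, ih]
      have hpascal := gaussBinom_succ_succ' Q (n + (k + 1 + a)) k
      rw [show n + (k + 1 + a) - k = n + a + 1 by omega] at hpascal
      rw [show n + 1 + (k + 1 + a) = n + (k + 1 + a) + 1 by omega, hpascal,
        show k + (a + 1) = k + 1 + a by omega]
      ring

theorem sum_gaussBinom_mul_inv_qPoch_add {Q : ℝ} (hQ : |Q| ≠ 1) (l k : ℕ) :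
    ∑ j ∈ Finset.range (k + 1), (qPoch Q Q (k - j))⁻¹ *
        (Q ^ (j * (j + 1)) * gaussBinom Q l j * (qPoch Q Q j)⁻¹
          + Q ^ ((j + 1) * (j + 1)) * gaussBinom Q l j * (qPoch Q Q (j + 1))⁻¹)
      = gaussBinom Q (l + (k + 1)) k * (qPoch Q Q (k + 1))⁻¹ := by
  rw [← sum_gaussBinom_mul_inv_qPoch_mul_inv_qPoch hQ l k 1]
  refine Finset.sum_congr rfl fun j _ ↦ ?_
  rw [inv_qPoch_self hQ j]
  ring

theorem sum_gaussBinom_mul_inv_qPoch_add_shift {Q : ℝ} (hQ : |Q| ≠ 1) (l k : ℕ) :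
    ∑ j ∈ Finset.range k, (qPoch Q Q (k - (j + 1)))⁻¹ *
        (Q ^ ((j + 1) * (j + 1)) * gaussBinom Q l j * (qPoch Q Q (j + 1))⁻¹)
      + ∑ j ∈ Finset.range (k + 1), (qPoch Q Q (k - j))⁻¹ *
        (Q ^ (j * (j + 1)) * gaussBinom Q l j * (qPoch Q Q j)⁻¹)
      = gaussBinom Q (l + (k + 1)) k * (qPoch Q Q k)⁻¹ := by
  have hextend : ∑ j ∈ Finset.range k, (qPoch Q Q (k - (j + 1)))⁻¹ *
        (Q ^ ((j + 1) * (j + 1)) * gaussBinom Q l j * (qPoch Q Q (j + 1))⁻¹)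
      = ∑ j ∈ Finset.range (k + 1), (1 - Q ^ (k - j)) * (qPoch Q Q (k - j))⁻¹ *
        (Q ^ ((j + 1) * (j + 1)) * gaussBinom Q l j * (qPoch Q Q (j + 1))⁻¹) := by
    rw [Finset.sum_range_succ, tsub_self, pow_zero, sub_self, zero_mul, zero_mul, add_zero]
    refine Finset.sum_congr rfl fun j hj ↦ ?_
    rw [inv_qPoch_self hQ (k - (j + 1)),
      show k - (j + 1) + 1 = k - j by have := Finset.mem_range.1 hj; omega]
  rw [hextend, inv_qPoch_self hQ k, mul_left_comm,
    ← sum_gaussBinom_mul_inv_qPoch_mul_inv_qPoch hQ l k 1, Finset.mul_sum,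
    ← Finset.sum_add_distrib]
  refine Finset.sum_congr rfl fun j hj ↦ ?_
  obtain ⟨d, rfl⟩ := Nat.exists_eq_add_of_le (Finset.mem_range_succ_iff.1 hj)
  rw [Nat.add_sub_cancel_left, inv_qPoch_self hQ j]
  ring

/-- The limit `k → ∞` of the `q`-Vandermonde convolution. -/
theorem sum_gaussBinom_mul_inv_qPoch {Q : ℝ} (hQ : |Q| ≠ 1) {n r : ℕ} (h : n ≤ r) (a : ℕ) :
    ∑ j ∈ Finset.range (r + 1), Q ^ (j * (j + a)) * gaussBinom Q n j * (qPoch Q Q (j + a))⁻¹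
      = (qPoch Q Q (n + a))⁻¹ := by
  induction n generalizing r a with
  | zero => rw [sum_gaussBinom_zero_mul Q fun j ↦ (qPoch Q Q (j + a))⁻¹]
  | succ n ih =>
    obtain _ | r := r
    · omega
    have hshift : ∀ j, (qPoch Q Q (j + 1 + a))⁻¹ = (qPoch Q Q (j + (a + 1)))⁻¹ := fun j ↦ by
      rw [add_right_comm, add_assoc]
    rw [sum_gaussBinom_succ_mul Q fun j ↦ (qPoch Q Q (j + a))⁻¹, ih (by omega)]
    simp only [hshift]
    rw [ih (by omega), ← add_assoc, inv_qPoch_self hQ (n + a)]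
    ring

theorem sum_gaussBinom_mul_inv_qPoch_succ {Q : ℝ} (hQ : |Q| ≠ 1) (n : ℕ) :
    ∑ k ∈ Finset.range (n + 2), Q ^ (k * (k + 1)) * gaussBinom Q (n + 1) k * (qPoch Q Q k)⁻¹
      = (1 - Q ^ (n + 1)) *
          ∑ k ∈ Finset.range (n + 1), Q ^ (k * (k + 1)) * gaussBinom Q n k * (qPoch Q Q k)⁻¹
        + Q ^ (n + 1) * (qPoch Q Q (n + 1))⁻¹ := by
  have hextend : ∑ k ∈ Finset.range (n + 1), Q ^ (k * (k + 1)) * gaussBinom Q n k * (qPoch Q Q k)⁻¹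
      = ∑ k ∈ Finset.range (n + 2), Q ^ (k * (k + 1)) * gaussBinom Q n k * (qPoch Q Q k)⁻¹ := by
    rw [Finset.sum_range_succ _ (n + 1), gaussBinom_eq_zero_of_lt Q n.lt_succ_self]
    ring
  have hvandermonde := sum_gaussBinom_mul_inv_qPoch hQ le_rfl 0 (n := n + 1)
  simp only [add_zero] at hvandermonde
  rw [hextend, ← hvandermonde, Finset.mul_sum, Finset.mul_sum, ← Finset.sum_add_distrib]
  refine Finset.sum_congr rfl fun k hk ↦ ?_
  obtain hkn | rfl := Nat.lt_succ_iff_lt_or_eq.1 (Finset.mem_range.1 hk)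
  · have hpow : Q ^ (n + 1 - k) * Q ^ (k * (k + 1)) = Q ^ (n + 1) * Q ^ (k * k) := by
      rw [← pow_add, ← pow_add]
      congr 1
      rw [mul_add_one]
      omega
    linear_combination (qPoch Q Q k)⁻¹ * (gaussBinom Q (n + 1) k * hpow
      - Q ^ (k * (k + 1)) * one_sub_pow_mul_gaussBinom Q (Nat.lt_succ_iff.1 hkn))
  · rw [gaussBinom_eq_zero_of_lt Q n.lt_succ_self]
    ring

theorem sum_alternating_inv_qPoch_succ {Q : ℝ} (hQ : |Q| ≠ 1) (n : ℕ) :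
    ∑ i ∈ Finset.range (n + 2), (-1) ^ i * Q ^ ((i + 1).choose 2) * (qPoch Q Q (n + 1 - i))⁻¹
      = (1 - Q ^ (n + 1)) *
          ∑ i ∈ Finset.range (n + 1), (-1) ^ i * Q ^ ((i + 1).choose 2) * (qPoch Q Q (n - i))⁻¹
        + Q ^ (n + 1) * (qPoch Q Q (n + 1))⁻¹ := by
  set G := fun n ↦
    ∑ i ∈ Finset.range (n + 1), (-1) ^ i * Q ^ ((i + 1).choose 2) * (qPoch Q Q (n - i))⁻¹ with hG
  have hdiff : G (n + 1) = G n + Q ^ (n + 1) *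
      ∑ i ∈ Finset.range (n + 2), (-1) ^ i * Q ^ (i.choose 2) * (qPoch Q Q (n + 1 - i))⁻¹ := by
    simp only [hG]
    rw [Finset.sum_range_succ, Finset.sum_range_succ _ (n + 1), mul_add, Finset.mul_sum,
      ← add_assoc, ← Finset.sum_add_distrib, tsub_self, Nat.choose_succ_succ', Nat.choose_one_right]
    congr 1
    · refine Finset.sum_congr rfl fun i hi ↦ ?_
      obtain ⟨d, rfl⟩ := Nat.exists_eq_add_of_le (Finset.mem_range_succ_iff.1 hi)
      rw [Nat.add_sub_cancel_left, add_assoc, Nat.add_sub_cancel_left, inv_qPoch_self hQ d,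
        Nat.choose_succ_succ', Nat.choose_one_right]
      ring
    · ring
  have hshift :
      ∑ i ∈ Finset.range (n + 2), (-1) ^ i * Q ^ (i.choose 2) * (qPoch Q Q (n + 1 - i))⁻¹
        = (qPoch Q Q (n + 1))⁻¹ - G n := by
    rw [Finset.sum_range_succ', sub_eq_neg_add, ← Finset.sum_neg_distrib]
    congr 1
    · refine Finset.sum_congr rfl fun i _ ↦ ?_
      rw [Nat.add_sub_add_right]
      ring
    · simp
  change G (n + 1) = (1 - Q ^ (n + 1)) * G n + _
  rw [hdiff, hshift]
  ring

theorem sum_gaussBinom_mul_inv_qPoch_eq_sum_alternating {Q : ℝ} (hQ : |Q| ≠ 1) (n : ℕ) :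
    ∑ k ∈ Finset.range (n + 1), Q ^ (k * (k + 1)) * gaussBinom Q n k * (qPoch Q Q k)⁻¹
      = ∑ i ∈ Finset.range (n + 1),
          (-1) ^ i * Q ^ ((i + 1).choose 2) * (qPoch Q Q (n - i))⁻¹ := by
  induction n with
  | zero => simp [gaussBinom_zero_right]
  | succ n ih =>
    rw [sum_gaussBinom_mul_inv_qPoch_succ hQ, ih, sum_alternating_inv_qPoch_succ hQ]

end SumIdentities

section Columns

variable {n : ℕ}

theorem colLen_one (lam : n.Partition) : colLen lam 1 = lam.parts.card :=
  congrArg Multiset.card (Multiset.filter_eq_self.2 fun _ ↦ lam.parts_pos)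

theorem colLen_eq_zero_of_lt (lam : n.Partition) {i : ℕ} (h : n < i) : colLen lam i = 0 := by
  rw [colLen, Multiset.card_eq_zero, Multiset.filter_eq_nil]
  intro j hj
  exact not_le.2 ((Nat.Partition.le_of_mem_parts hj).trans_lt h)

theorem count_parts_eq_zero_of_lt (lam : n.Partition) {i : ℕ} (h : n < i) :
    lam.parts.count i = 0 :=
  Multiset.count_eq_zero.2 fun hi ↦ h.not_ge (Nat.Partition.le_of_mem_parts hi)

theorem count_parts_zero (lam : n.Partition) : lam.parts.count 0 = 0 :=
  Multiset.count_eq_zero.2 fun h ↦ (lam.parts_pos h).false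

theorem card_parts_le (lam : n.Partition) : lam.parts.card ≤ n := by
  conv_rhs => rw [← lam.parts_sum]
  simpa using Multiset.card_nsmul_le_sum fun j hj ↦ lam.parts_pos hj

/-- The partition whose diagram is that of `μ` with a new first column of size `a`. -/
def addColumn (a : ℕ) (μ : n.Partition) (h : μ.parts.card ≤ a) : (a + n).Partition where
  parts := (μ.parts + Multiset.replicate (a - μ.parts.card) 0).map (· + 1)
  parts_pos hi := by
    obtain ⟨j, -, rfl⟩ := Multiset.mem_map.1 hi
    exact j.succ_pos
  parts_sum := by
    rw [Multiset.sum_map_add, Multiset.map_id', Multiset.sum_add, μ.parts_sum]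
    simp only [Multiset.sum_replicate, Multiset.map_const', Multiset.card_add,
      Multiset.card_replicate, smul_eq_mul, mul_one, mul_zero, add_zero]
    omega

variable {a : ℕ} {μ : n.Partition} (h : μ.parts.card ≤ a)

theorem card_parts_addColumn : (addColumn a μ h).parts.card = a := by
  simp [addColumn, h]

theorem count_succ_parts_addColumn (i : ℕ) :
    (addColumn a μ h).parts.count (i + 1)
      = μ.parts.count i + (Multiset.replicate (a - μ.parts.card) 0).count i := by
  rw [← Multiset.count_add]
  exact Multiset.count_map_eq_count' _ _ (add_left_injective 1) i

theorem count_one_parts_addColumn :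
    (addColumn a μ h).parts.count 1 = a - μ.parts.card := by
  rw [← zero_add 1, count_succ_parts_addColumn, count_parts_zero, zero_add,
    Multiset.count_replicate_self]

theorem count_add_two_parts_addColumn (i : ℕ) :
    (addColumn a μ h).parts.count (i + 2) = μ.parts.count (i + 1) := by
  rw [count_succ_parts_addColumn, Multiset.count_replicate, if_neg i.succ_ne_zero.symm, add_zero]

theorem colLen_one_addColumn : colLen (addColumn a μ h) 1 = a := by
  rw [colLen_one, card_parts_addColumn]

theorem colLen_add_two_addColumn (i : ℕ) :
    colLen (addColumn a μ h) (i + 2) = colLen μ (i + 1) := by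
  simp [colLen, addColumn, Multiset.filter_map, Multiset.filter_eq_nil, Multiset.mem_replicate]

theorem addColumn_injective {μ ν : n.Partition} (hμ : μ.parts.card ≤ a) (hν : ν.parts.card ≤ a)
    (h : addColumn a μ hμ = addColumn a ν hν) : μ = ν := by
  refine Nat.Partition.ext (Multiset.ext.2 fun i ↦ ?_)
  obtain _ | i := i
  · rw [count_parts_zero, count_parts_zero]
  · rw [← count_add_two_parts_addColumn hμ, h, count_add_two_parts_addColumn]

theorem exists_addColumn_eq {lam : (a + n).Partition} (h : lam.parts.card = a) :
    ∃ (μ : n.Partition) (hμ : μ.parts.card ≤ a), addColumn a μ hμ = lam := by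
  set s := lam.parts.map (· - 1) with hs
  have hsucc : s.map (· + 1) = lam.parts := by
    rw [hs, Multiset.map_map]
    exact (Multiset.map_congr rfl fun j hj ↦ Nat.sub_add_cancel (lam.parts_pos hj)).trans
      (Multiset.map_id _)
  have hcard : s.card = a := by rw [hs, Multiset.card_map, h]
  have hsum : s.sum = n := by
    have := congrArg Multiset.sum hsucc
    rw [Multiset.sum_map_add, Multiset.map_id', Multiset.map_const', Multiset.sum_replicate, hcard,
      smul_eq_mul, mul_one, lam.parts_sum] at this
    omega
  have hsplit := Multiset.filter_add_not (· ≠ 0) s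
  simp only [not_not, Multiset.filter_eq'] at hsplit
  have hzeros : a - (s.filter (· ≠ 0)).card = s.count 0 := by
    have := congrArg Multiset.card hsplit
    simp only [Multiset.card_add, Multiset.card_replicate] at this
    omega
  refine ⟨.ofSums n s hsum, (Multiset.card_le_card (Multiset.filter_le _ s)).trans_eq hcard, ?_⟩
  ext1
  simp only [addColumn, Nat.Partition.ofSums]
  rw [hzeros, hsplit, hsucc]

theorem sum_card_parts_eq_sum_addColumn {M : Type*} [AddCommMonoid M]
    (f : (a + n).Partition → M) :
    ∑ lam with lam.parts.card = a, f lam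
      = ∑ μ : {μ : n.Partition // μ.parts.card ≤ a}, f (addColumn a μ μ.2) := by
  symm
  refine Finset.sum_bij (fun μ _ ↦ addColumn a μ.1 μ.2) (fun μ _ ↦ ?_) (fun μ _ ν _ h ↦ ?_)
    (fun lam hlam ↦ ?_) fun _ _ ↦ rfl
  · exact Finset.mem_filter.2 ⟨Finset.mem_univ _, card_parts_addColumn μ.2⟩
  · exact Subtype.ext (addColumn_injective μ.2 ν.2 h)
  · obtain ⟨μ, hμ, rfl⟩ := exists_addColumn_eq (Finset.mem_filter.1 hlam).2
    exact ⟨⟨μ, hμ⟩, Finset.mem_univ _, rfl⟩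

end Columns

section JordanWeight

variable {n : ℕ}

/-- `λ` is the Jordan type of a nilpotent element of an orthogonal (`e` even) or symplectic
(`e` odd) Lie algebra. Only the parity of `e` matters; it is a natural number so that removing the
first column of the diagram is `e ↦ e + 1`. -/
def IsJordanType (e : ℕ) (lam : n.Partition) : Prop :=
  ∀ i, Even (i + e) → Even (lam.parts.count i)

open Classical in
/-- The weight of `λ` in Anzanello's sum without its numerator `1 - q^{-λ'_1}`, as a function of
`p = 1/q`, together with its symplectic analogue (`e` odd). The exponent is written column by
column: `(∑ i, λ'_i ^ 2 - o(λ)) / 2` is the sum of `λ'_i (λ'_i - 1) / 2` over odd `i` and of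
`λ'_i (λ'_i + 1) / 2` over even `i`. The index `i` below starts from `0`, not `1`. -/
noncomputable def jordanWeight (p : ℝ) (e : ℕ) (lam : n.Partition) : ℝ :=
  if IsJordanType e lam then
    p ^ (∑ i ∈ Finset.range n, (colLen lam (i + 1) + (i + e) % 2).choose 2) *
      ∏ i ∈ Finset.range n, (qPoch (p ^ 2) (p ^ 2) (lam.parts.count (i + 1) / 2))⁻¹
  else 0

theorem isJordanType_add_two {e : ℕ} {lam : n.Partition} :
    IsJordanType (e + 2) lam ↔ IsJordanType e lam :=
  forall_congr' fun i ↦ by rw [← add_assoc, Nat.even_add, iff_true_right even_two]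

theorem jordanWeight_add_two (p : ℝ) (e : ℕ) (lam : n.Partition) :
    jordanWeight p (e + 2) lam = jordanWeight p e lam := by
  classical
  simp only [jordanWeight, ← add_assoc, Nat.add_mod_right]
  exact if_congr isJordanType_add_two rfl rfl

theorem isJordanType_addColumn {e a : ℕ} {μ : n.Partition} (h : μ.parts.card ≤ a) :
    IsJordanType e (addColumn a μ h)
      ↔ (Odd e → Even (a - μ.parts.card)) ∧ IsJordanType (e + 1) μ := by
  have hodd : Even (1 + e) ↔ Odd e := by rw [add_comm, Nat.even_add_one, Nat.not_even_iff_odd]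
  constructor
  · refine fun hlam ↦ ⟨fun he ↦ ?_, fun i hi ↦ ?_⟩
    · rw [← count_one_parts_addColumn h]
      exact hlam 1 (hodd.2 he)
    · obtain _ | i := i
      · rw [count_parts_zero]
        exact Even.zero
      · rw [← count_add_two_parts_addColumn h]
        exact hlam _ (by rwa [show i + 2 + e = i + 1 + (e + 1) by omega])
  · rintro ⟨hone, hμ⟩ i hi
    obtain _ | _ | i := i
    · rw [count_parts_zero]
      exact Even.zero
    · rw [count_one_parts_addColumn]
      exact hone (hodd.1 hi)
    · rw [count_add_two_parts_addColumn]
      exact hμ _ (by rwa [show i + 1 + (e + 1) = i + 2 + e by omega])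

theorem sum_choose_colLen_addColumn {a : ℕ} (μ : n.Partition) (h : μ.parts.card ≤ a + 1) (e : ℕ) :
    ∑ i ∈ Finset.range (a + 1 + n),
        (colLen (addColumn (a + 1) μ h) (i + 1) + (i + e) % 2).choose 2
      = ∑ i ∈ Finset.range n, (colLen μ (i + 1) + (i + (e + 1)) % 2).choose 2
        + (a + 1 + e % 2).choose 2 := by
  rw [show Finset.range (a + 1 + n) = Finset.range (a + n + 1) by rw [add_right_comm],
    Finset.sum_range_succ', zero_add, zero_add, colLen_one_addColumn]
  simp only [colLen_add_two_addColumn, add_assoc, add_comm 1 e]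
  congr 1
  refine Finset.eventually_constant_sum (fun i hi ↦ ?_) (Nat.le_add_left n a)
  rw [colLen_eq_zero_of_lt μ (Nat.lt_succ_of_le hi), zero_add]
  exact Nat.choose_eq_zero_of_lt (Nat.mod_lt _ two_pos)

theorem prod_inv_qPoch_addColumn {a : ℕ} (μ : n.Partition) (h : μ.parts.card ≤ a + 1) (Q : ℝ) :
    ∏ i ∈ Finset.range (a + 1 + n),
        (qPoch Q Q ((addColumn (a + 1) μ h).parts.count (i + 1) / 2))⁻¹
      = (∏ i ∈ Finset.range n, (qPoch Q Q (μ.parts.count (i + 1) / 2))⁻¹)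
        * (qPoch Q Q ((a + 1 - μ.parts.card) / 2))⁻¹ := by
  rw [show Finset.range (a + 1 + n) = Finset.range (a + n + 1) by rw [add_right_comm],
    Finset.prod_range_succ', zero_add, count_one_parts_addColumn]
  simp only [add_assoc, Nat.reduceAdd, count_add_two_parts_addColumn]
  congr 1
  refine Finset.eventually_constant_prod (fun i hi ↦ ?_) (Nat.le_add_left n a)
  rw [count_parts_eq_zero_of_lt μ (Nat.lt_succ_of_le hi), Nat.zero_div, qPoch_zero, inv_one]

open Classical in
theorem jordanWeight_addColumn (p : ℝ) (e a : ℕ) (μ : n.Partition) (h : μ.parts.card ≤ a + 1) :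
    jordanWeight p e (addColumn (a + 1) μ h)
      = (if Odd e → Even (a + 1 - μ.parts.card) then
          p ^ (a + 1 + e % 2).choose 2 * (qPoch (p ^ 2) (p ^ 2) ((a + 1 - μ.parts.card) / 2))⁻¹
        else 0) * jordanWeight p (e + 1) μ := by
  simp only [jordanWeight, isJordanType_addColumn, sum_choose_colLen_addColumn,
    prod_inv_qPoch_addColumn, ite_and, pow_add]
  split_ifs <;> ring

end JordanWeight

section JordanSum

/-- The sum of `jordanWeight p e` over the partitions of `n` with `a` parts. -/
noncomputable def jordanSum (p : ℝ) (e n a : ℕ) : ℝ :=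
  ∑ lam : n.Partition with lam.parts.card = a, jordanWeight p e lam

theorem jordanSum_add_two (p : ℝ) (e n a : ℕ) : jordanSum p (e + 2) n a = jordanSum p e n a := by
  simp only [jordanSum, jordanWeight_add_two]

theorem jordanSum_eq_zero_of_lt (p : ℝ) (e : ℕ) {n a : ℕ} (h : n < a) : jordanSum p e n a = 0 := by
  rw [jordanSum, Finset.filter_false_of_mem, Finset.sum_empty]
  exact fun lam _ ↦ ((card_parts_le lam).trans_lt h).ne

theorem jordanSum_zero_right (p : ℝ) (e : ℕ) {n : ℕ} (hn : n ≠ 0) : jordanSum p e n 0 = 0 := by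
  rw [jordanSum, Finset.filter_false_of_mem, Finset.sum_empty]
  intro lam _ h
  refine hn ?_
  rw [← lam.parts_sum, Multiset.card_eq_zero.1 h, Multiset.sum_zero]

theorem jordanSum_zero_zero (p : ℝ) (e : ℕ) : jordanSum p e 0 0 = 1 := by
  simp [jordanSum, jordanWeight, IsJordanType, Finset.filter_true_of_mem]

open Classical in
theorem jordanSum_add_column (p : ℝ) (e n a : ℕ) :
    jordanSum p e (a + 1 + n) (a + 1)
      = ∑ b ∈ Finset.range (a + 2), (if Odd e → Even (a + 1 - b) then
          p ^ (a + 1 + e % 2).choose 2 * (qPoch (p ^ 2) (p ^ 2) ((a + 1 - b) / 2))⁻¹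
        else 0) * jordanSum p (e + 1) n b := by
  rw [jordanSum, sum_card_parts_eq_sum_addColumn]
  simp only [jordanWeight_addColumn, jordanSum, Finset.mul_sum]
  rw [← Finset.sum_subtype {μ : n.Partition | μ.parts.card ≤ a + 1} (by simp) fun μ ↦
      (if Odd e → Even (a + 1 - μ.parts.card) then
        p ^ (a + 1 + e % 2).choose 2 * (qPoch (p ^ 2) (p ^ 2) ((a + 1 - μ.parts.card) / 2))⁻¹
      else 0) * jordanWeight p (e + 1) μ,
    ← Finset.sum_fiberwise_of_maps_to (t := Finset.range (a + 2)) (g := fun μ ↦ μ.parts.card)]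
  · refine Finset.sum_congr rfl fun b hb ↦ ?_
    rw [Finset.filter_filter]
    refine Finset.sum_congr (Finset.filter_congr fun μ _ ↦ and_iff_right_of_imp fun h ↦
      h ▸ Finset.mem_range_succ_iff.1 hb) fun μ hμ ↦ ?_
    rw [(Finset.mem_filter.1 hμ).2]
  · exact fun μ hμ ↦ Finset.mem_range_succ_iff.2 (Finset.mem_filter.1 hμ).2

end JordanSum

section JordanRecursion

variable (p : ℝ)

theorem jordanSum_zero_add_column (n a : ℕ) :
    jordanSum p 0 (a + 1 + n) (a + 1) = p ^ (a + 1).choose 2 *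
      ∑ b ∈ Finset.range (a + 2),
        (qPoch (p ^ 2) (p ^ 2) ((a + 1 - b) / 2))⁻¹ * jordanSum p 1 n b := by
  simp only [jordanSum_add_column, Nat.not_odd_zero, false_imp_iff, if_true, Nat.zero_mod, add_zero,
    zero_add, mul_assoc, Finset.mul_sum]

theorem jordanSum_one_add_column (n a : ℕ) :
    jordanSum p 1 (a + 1 + n) (a + 1) = p ^ (a + 2).choose 2 *
      ∑ b ∈ Finset.range (a + 2), if Even (a + 1 - b) then
        (qPoch (p ^ 2) (p ^ 2) ((a + 1 - b) / 2))⁻¹ * jordanSum p 0 n b else 0 := by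
  simp only [jordanSum_add_column, odd_one, true_imp_iff, Nat.one_mod, mul_assoc, Finset.mul_sum,
    Nat.reduceAdd, jordanSum_add_two p 0, ite_mul, mul_ite, zero_mul, mul_zero]

theorem jordanSum_zero_self (a : ℕ) :
    jordanSum p 0 (a + 1) (a + 1)
      = p ^ (a + 1).choose 2 * (qPoch (p ^ 2) (p ^ 2) ((a + 1) / 2))⁻¹ := by
  have h := jordanSum_zero_add_column p 0 a
  rwa [Finset.sum_range_succ', Finset.sum_eq_zero fun b _ ↦ by
    rw [jordanSum_eq_zero_of_lt p 1 b.succ_pos, mul_zero], jordanSum_zero_zero, zero_add,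
    tsub_zero, mul_one] at h

theorem jordanSum_one_self_even (k : ℕ) :
    jordanSum p 1 (2 * k + 2) (2 * k + 2)
      = p ^ (2 * k + 3).choose 2 * (qPoch (p ^ 2) (p ^ 2) (k + 1))⁻¹ := by
  have h := jordanSum_one_add_column p 0 (2 * k + 1)
  rwa [Finset.sum_range_succ', Finset.sum_eq_zero fun b _ ↦ by
    rw [jordanSum_eq_zero_of_lt p 0 b.succ_pos, mul_zero, ite_self], jordanSum_zero_zero, zero_add,
    tsub_zero, mul_one,
    if_pos (show Even (2 * k + 1 + 1) from (even_two_mul k).add even_two),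
    show (2 * k + 1 + 1) / 2 = k + 1 by omega] at h

theorem jordanSum_zero_add_column_odd (n k : ℕ) :
    jordanSum p 0 (2 * k + 1 + n) (2 * k + 1) = p ^ (2 * k + 1).choose 2 *
      ∑ j ∈ Finset.range (k + 1), (qPoch (p ^ 2) (p ^ 2) (k - j))⁻¹ *
        (jordanSum p 1 n (2 * j) + jordanSum p 1 n (2 * j + 1)) := by
  rw [jordanSum_zero_add_column, ← mul_add_one, sum_range_two_mul]
  congr 1
  refine Finset.sum_congr rfl fun j hj ↦ ?_
  rw [Finset.mem_range_succ_iff] at hj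
  rw [show (2 * k + 1 - 2 * j) / 2 = k - j by omega,
    show (2 * k + 1 - (2 * j + 1)) / 2 = k - j by omega, mul_add]

theorem jordanSum_one_add_column_odd (n k : ℕ) :
    jordanSum p 1 (2 * k + 1 + n) (2 * k + 1) = p ^ (2 * k + 2).choose 2 *
      ∑ j ∈ Finset.range (k + 1),
        (qPoch (p ^ 2) (p ^ 2) (k - j))⁻¹ * jordanSum p 0 n (2 * j + 1) := by
  rw [jordanSum_one_add_column, ← mul_add_one, sum_range_two_mul]
  congr 1
  refine Finset.sum_congr rfl fun j hj ↦ ?_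
  rw [Finset.mem_range_succ_iff] at hj
  rw [if_neg (by rw [Nat.even_iff]; omega), if_pos (by rw [Nat.even_iff]; omega), zero_add,
    show (2 * k + 1 - (2 * j + 1)) / 2 = k - j by omega]

theorem jordanSum_zero_add_column_even {n : ℕ} (hn : n ≠ 0) (k : ℕ) :
    jordanSum p 0 (2 * k + 2 + n) (2 * k + 2) = p ^ (2 * k + 2).choose 2 *
      ∑ j ∈ Finset.range (k + 1), (qPoch (p ^ 2) (p ^ 2) (k - j))⁻¹ *
        (jordanSum p 1 n (2 * j + 1) + jordanSum p 1 n (2 * j + 2)) := by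
  rw [jordanSum_zero_add_column, Finset.sum_range_succ', jordanSum_zero_right p 1 hn, mul_zero,
    add_zero, show 2 * k + 1 + 1 = 2 * (k + 1) from rfl, sum_range_two_mul]
  congr 1
  refine Finset.sum_congr rfl fun j hj ↦ ?_
  rw [Finset.mem_range_succ_iff] at hj
  rw [show (2 * (k + 1) - (2 * j + 1)) / 2 = k - j by omega,
    show (2 * (k + 1) - (2 * j + 1 + 1)) / 2 = k - j by omega, mul_add]

theorem jordanSum_one_add_column_even {n : ℕ} (hn : n ≠ 0) (k : ℕ) :
    jordanSum p 1 (2 * k + 2 + n) (2 * k + 2) = p ^ (2 * k + 3).choose 2 *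
      ∑ j ∈ Finset.range (k + 1),
        (qPoch (p ^ 2) (p ^ 2) (k - j))⁻¹ * jordanSum p 0 n (2 * j + 2) := by
  rw [jordanSum_one_add_column, Finset.sum_range_succ', jordanSum_zero_right p 0 hn, mul_zero,
    ite_self, add_zero, show 2 * k + 1 + 1 = 2 * (k + 1) from rfl, sum_range_two_mul]
  congr 1
  refine Finset.sum_congr rfl fun j hj ↦ ?_
  rw [Finset.mem_range_succ_iff] at hj
  rw [if_neg (by rw [Nat.even_iff]; omega), if_pos (by rw [Nat.even_iff]; omega), zero_add,
    show (2 * (k + 1) - (2 * j + 1 + 1)) / 2 = k - j by omega]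

end JordanRecursion

section ClosedForms

mutual

theorem jordanSum_one_odd {p : ℝ} (hp : |p ^ 2| ≠ 1) (m k : ℕ) :
    jordanSum p 1 (2 * m + 2) (2 * k + 1) = p ^ (m + 1) *
      ((p ^ 2) ^ (k * (k + 1)) * gaussBinom (p ^ 2) m k * (qPoch (p ^ 2) (p ^ 2) k)⁻¹) := by
  obtain hmk | ⟨l, rfl⟩ := (lt_or_ge m k).imp id Nat.exists_eq_add_of_le'
  · rw [jordanSum_eq_zero_of_lt p 1 (by omega), gaussBinom_eq_zero_of_lt _ hmk]
    ring
  have hsum : ∑ j ∈ Finset.range (k + 1), (qPoch (p ^ 2) (p ^ 2) (k - j))⁻¹ *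
        jordanSum p 0 (2 * l + 1) (2 * j + 1)
      = p ^ l * (gaussBinom (p ^ 2) (l + k) k * (qPoch (p ^ 2) (p ^ 2) k)⁻¹) := by
    have hvandermonde := sum_gaussBinom_mul_inv_qPoch_mul_inv_qPoch hp l k 0
    simp only [add_zero] at hvandermonde
    rw [← hvandermonde, Finset.mul_sum]
    refine Finset.sum_congr rfl fun j _ ↦ ?_
    rw [jordanSum_zero_odd hp l j]
    ring
  rw [show 2 * (l + k) + 2 = 2 * k + 1 + (2 * l + 1) by omega, jordanSum_one_add_column_odd, hsum,
    pow_choose_two_two_mul_add_two]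
  ring
termination_by 2 * m + 2
decreasing_by omega

theorem jordanSum_zero_odd {p : ℝ} (hp : |p ^ 2| ≠ 1) (m k : ℕ) :
    jordanSum p 0 (2 * m + 1) (2 * k + 1) = p ^ m *
      ((p ^ 2) ^ (k * k) * gaussBinom (p ^ 2) m k * (qPoch (p ^ 2) (p ^ 2) k)⁻¹) := by
  obtain hmk | rfl | ⟨l, rfl⟩ : m < k ∨ m = k ∨ ∃ l, m = l + (k + 1) :=
    (lt_trichotomy m k).imp id (Or.imp id Nat.exists_eq_add_of_le')
  · rw [jordanSum_eq_zero_of_lt p 0 (by omega), gaussBinom_eq_zero_of_lt _ hmk]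
    ring
  · rw [jordanSum_zero_self, pow_choose_two_two_mul_add_one, gaussBinom_self,
      show (2 * m + 1) / 2 = m by omega]
    ring
  have hsum : ∑ j ∈ Finset.range (k + 1), (qPoch (p ^ 2) (p ^ 2) (k - j))⁻¹ *
        (jordanSum p 1 (2 * l + 2) (2 * j) + jordanSum p 1 (2 * l + 2) (2 * j + 1))
      = p ^ (l + 1) * (gaussBinom (p ^ 2) (l + (k + 1)) k * (qPoch (p ^ 2) (p ^ 2) k)⁻¹) := by
    simp only [mul_add (_ : ℝ)⁻¹, Finset.sum_add_distrib]
    rw [Finset.sum_range_succ', mul_zero, jordanSum_zero_right p 1 (by omega), mul_zero, add_zero,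
      ← sum_gaussBinom_mul_inv_qPoch_add_shift hp, mul_add, Finset.mul_sum, Finset.mul_sum]
    congr 1 <;> refine Finset.sum_congr rfl fun j _ ↦ ?_
    · rw [mul_add_one, jordanSum_one_even hp l j]
      ring
    · rw [jordanSum_one_odd hp l j]
      ring
  rw [show 2 * (l + (k + 1)) + 1 = 2 * k + 1 + (2 * l + 2) by omega, jordanSum_zero_add_column_odd,
    hsum, pow_choose_two_two_mul_add_one]
  ring
termination_by 2 * m + 1
decreasing_by all_goals omega

theorem jordanSum_one_even {p : ℝ} (hp : |p ^ 2| ≠ 1) (m k : ℕ) :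
    jordanSum p 1 (2 * m + 2) (2 * k + 2) = p ^ (m + 1) *
      ((p ^ 2) ^ ((k + 1) * (k + 1)) * gaussBinom (p ^ 2) m k *
        (qPoch (p ^ 2) (p ^ 2) (k + 1))⁻¹) := by
  obtain hmk | rfl | ⟨l, rfl⟩ : m < k ∨ m = k ∨ ∃ l, m = l + (k + 1) :=
    (lt_trichotomy m k).imp id (Or.imp id Nat.exists_eq_add_of_le')
  · rw [jordanSum_eq_zero_of_lt p 1 (by omega), gaussBinom_eq_zero_of_lt _ hmk]
    ring
  · rw [jordanSum_one_self_even, show 2 * m + 3 = 2 * (m + 1) + 1 from rfl,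
      pow_choose_two_two_mul_add_one, gaussBinom_self]
    ring
  have hsum : ∑ j ∈ Finset.range (k + 1), (qPoch (p ^ 2) (p ^ 2) (k - j))⁻¹ *
        jordanSum p 0 (2 * l + 2) (2 * j + 2)
      = p ^ (l + 1) *
        (gaussBinom (p ^ 2) (l + (k + 1)) k * (qPoch (p ^ 2) (p ^ 2) (k + 1))⁻¹) := by
    rw [← sum_gaussBinom_mul_inv_qPoch_mul_inv_qPoch hp, Finset.mul_sum]
    refine Finset.sum_congr rfl fun j _ ↦ ?_
    rw [jordanSum_zero_even hp l j]
    ring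
  rw [show 2 * (l + (k + 1)) + 2 = 2 * k + 2 + (2 * l + 2) by omega,
    jordanSum_one_add_column_even p (by omega), hsum,
    show 2 * k + 3 = 2 * (k + 1) + 1 from rfl, pow_choose_two_two_mul_add_one]
  ring
termination_by 2 * m + 2
decreasing_by omega

theorem jordanSum_zero_even {p : ℝ} (hp : |p ^ 2| ≠ 1) (m k : ℕ) :
    jordanSum p 0 (2 * m + 2) (2 * k + 2) = p ^ (m + 1) *
      ((p ^ 2) ^ (k * (k + 1)) * gaussBinom (p ^ 2) m k * (qPoch (p ^ 2) (p ^ 2) (k + 1))⁻¹) := by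
  obtain hmk | rfl | ⟨l, rfl⟩ : m < k ∨ m = k ∨ ∃ l, m = l + (k + 1) :=
    (lt_trichotomy m k).imp id (Or.imp id Nat.exists_eq_add_of_le')
  · rw [jordanSum_eq_zero_of_lt p 0 (by omega), gaussBinom_eq_zero_of_lt _ hmk]
    ring
  · rw [jordanSum_zero_self, pow_choose_two_two_mul_add_two, gaussBinom_self,
      show (2 * m + 1 + 1) / 2 = m + 1 by omega]
    ring
  have hsum : ∑ j ∈ Finset.range (k + 1), (qPoch (p ^ 2) (p ^ 2) (k - j))⁻¹ *
        (jordanSum p 1 (2 * l + 2) (2 * j + 1) + jordanSum p 1 (2 * l + 2) (2 * j + 2))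
      = p ^ (l + 1) *
        (gaussBinom (p ^ 2) (l + (k + 1)) k * (qPoch (p ^ 2) (p ^ 2) (k + 1))⁻¹) := by
    rw [← sum_gaussBinom_mul_inv_qPoch_add hp, Finset.mul_sum]
    refine Finset.sum_congr rfl fun j _ ↦ ?_
    rw [jordanSum_one_odd hp l j, jordanSum_one_even hp l j]
    ring
  rw [show 2 * (l + (k + 1)) + 2 = 2 * k + 2 + (2 * l + 2) by omega,
    jordanSum_zero_add_column_even p (by omega), hsum, pow_choose_two_two_mul_add_two]
  ring
termination_by 2 * m + 2
decreasing_by all_goals omega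

end

end ClosedForms

section Anzanello

theorem IsJordanType.even_add_mul_card {e n : ℕ} {lam : n.Partition} (h : IsJordanType e lam) :
    Even (n + (e + 1) * lam.parts.card) := by
  have hsum : (lam.parts.map fun i ↦ i + (e + 1)).sum = n + (e + 1) * lam.parts.card := by
    rw [Multiset.sum_map_add, Multiset.map_id', lam.parts_sum, Multiset.map_const',
      Multiset.sum_replicate, smul_eq_mul, mul_comm]
  rw [← hsum, Finset.sum_multiset_map_count]
  refine Finset.even_sum _ fun i _ ↦ ?_
  obtain hi | hi := Nat.even_or_odd (i + e)
  · exact (h i hi).mul_right _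
  · exact hi.add_one.mul_left _

theorem jordanSum_eq_zero_of_odd (p : ℝ) {e n a : ℕ} (h : Odd (n + (e + 1) * a)) :
    jordanSum p e n a = 0 := by
  refine Finset.sum_eq_zero fun lam hlam ↦ if_neg fun htype ↦ ?_
  rw [← (Finset.mem_filter.1 hlam).2] at h
  exact Nat.not_even_iff_odd.2 h htype.even_add_mul_card

theorem sum_one_sub_pow_card_mul_jordanWeight (p : ℝ) (n : ℕ) :
    ∑ lam : n.Partition, (1 - p ^ lam.parts.card) * jordanWeight p 0 lam
      = ∑ a ∈ Finset.range (n + 1), (1 - p ^ a) * jordanSum p 0 n a := by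
  rw [← Finset.sum_fiberwise_of_maps_to (t := Finset.range (n + 1)) (g := fun lam ↦ lam.parts.card)
    fun lam _ ↦ Finset.mem_range_succ_iff.2 (card_parts_le lam)]
  refine Finset.sum_congr rfl fun a _ ↦ ?_
  rw [jordanSum, Finset.mul_sum]
  exact Finset.sum_congr rfl fun lam hlam ↦ by rw [(Finset.mem_filter.1 hlam).2]

theorem sum_one_sub_pow_mul_jordanSum {p : ℝ} (hp : |p ^ 2| ≠ 1) (m : ℕ) :
    ∑ a ∈ Finset.range (2 * m + 1), (1 - p ^ a) * jordanSum p 0 (2 * m) a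
      = p ^ m * ∑ i ∈ Finset.range m,
          (-1) ^ i * (p ^ 2) ^ (i + 1).choose 2 * (qPoch (p ^ 2) (p ^ 2) (m - (i + 1)))⁻¹ := by
  obtain _ | n := m
  · simp
  rw [Finset.sum_range_succ', pow_zero, sub_self, zero_mul, add_zero, sum_range_two_mul]
  simp only [Nat.add_sub_add_right]
  rw [← sum_gaussBinom_mul_inv_qPoch_eq_sum_alternating hp, Finset.mul_sum]
  refine Finset.sum_congr rfl fun j _ ↦ ?_
  rw [jordanSum_eq_zero_of_odd p (by rw [Nat.odd_iff]; omega), mul_zero, zero_add, mul_add_one,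
    jordanSum_zero_even hp n j, inv_qPoch_self hp j]
  ring

theorem numOddParts_eq_sum_alternating_colLen {n : ℕ} (lam : n.Partition) :
    (numOddParts lam : ℝ) = ∑ i ∈ Finset.range n, (-1) ^ i * (colLen lam (i + 1) : ℝ) := by
  suffices h : ∀ s : Multiset ℕ, (∀ j ∈ s, j ≤ n) → ((s.filter (Odd ·)).card : ℝ)
      = ∑ i ∈ Finset.range n, (-1) ^ i * ((s.filter (i + 1 ≤ ·)).card : ℝ) from
    h lam.parts fun _ ↦ Nat.Partition.le_of_mem_parts
  intro s hs
  induction s using Multiset.induction_on with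
  | empty => simp
  | cons j s ih =>
    have hj : ∑ i ∈ Finset.range n, (-1 : ℝ) ^ i * (if i + 1 ≤ j then 1 else 0)
        = if Odd j then 1 else 0 := by
      simp only [mul_ite, mul_one, mul_zero, ← Finset.sum_filter]
      rw [show ({i ∈ Finset.range n | i + 1 ≤ j}) = Finset.range j by
        ext i
        have := hs j (Multiset.mem_cons_self j s)
        simp only [Finset.mem_filter, Finset.mem_range]
        omega, neg_one_geom_sum]
      simp only [← Nat.not_even_iff_odd, ite_not]
    simp only [Multiset.filter_cons, Multiset.card_add, apply_ite Multiset.card,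
      Multiset.card_singleton, Multiset.card_zero, Nat.cast_add, Nat.cast_ite, Nat.cast_one,
      Nat.cast_zero, mul_add, Finset.sum_add_distrib, hj,
      ih fun i hi ↦ hs i (Multiset.mem_cons_of_mem hi)]

theorem sum_sq_colLen_sub_numOddParts {n : ℕ} (lam : n.Partition) :
    (∑ i ∈ Finset.range n, (colLen lam (i + 1) : ℝ) ^ 2) - numOddParts lam
      = 2 * ((∑ i ∈ Finset.range n, (colLen lam (i + 1) + i % 2).choose 2 : ℕ) : ℝ) := by
  rw [numOddParts_eq_sum_alternating_colLen, ← Finset.sum_sub_distrib, Nat.cast_sum, Finset.mul_sum]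
  refine Finset.sum_congr rfl fun i _ ↦ ?_
  rw [Nat.cast_choose_two]
  obtain hi | hi := Nat.even_or_odd i
  · rw [hi.neg_one_pow, Nat.even_iff.1 hi]
    push_cast
    ring
  · rw [hi.neg_one_pow, Nat.odd_iff.1 hi]
    push_cast
    ring

open Classical in
theorem jordanWeight_inv (q : ℝ) {n : ℕ} (lam : n.Partition) :
    jordanWeight q⁻¹ 0 lam
      = if ∀ i, Even i → Even (lam.parts.count i) then
          1 / (q ^ (((∑ i ∈ Finset.Icc 1 n, (colLen lam i : ℝ) ^ 2) - (numOddParts lam : ℝ)) / 2) *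
            ∏ i ∈ Finset.Icc 1 n, qPoch (q ^ (-2 : ℤ)) (q ^ (-2 : ℤ)) (lam.parts.count i / 2))
        else 0 := by
  rw [sum_Icc_eq_sum_range, prod_Icc_eq_prod_range, sum_sq_colLen_sub_numOddParts,
    mul_div_cancel_left₀ _ two_ne_zero, Real.rpow_natCast, one_div, mul_inv, ← inv_pow,
    ← Finset.prod_inv_distrib, zpow_neg]
  simp [jordanWeight, IsJordanType]

end Anzanello

open Classical in
theorem anzanello_third_conjecture_general (q : ℝ) (hq0 : q ≠ 0) (hq1 : |q| ≠ 1) (m : ℕ) :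
    (∑ lam : Nat.Partition (2 * m),
      if ∀ i, Even i → Even (lam.parts.count i) then
        (1 - q ^ (-(colLen lam 1 : ℝ))) /
          (q ^ ((((∑ i ∈ Finset.Icc 1 (2 * m), ((colLen lam i : ℝ)) ^ 2))
                - (numOddParts lam : ℝ)) / 2)
            * ∏ i ∈ Finset.Icc 1 (2 * m),
                qPoch (q ^ (-2 : ℤ)) (q ^ (-2 : ℤ)) (lam.parts.count i / 2))
      else 0)
    = 1 / q ^ m * ∑ i ∈ Finset.Icc 1 m,
        (-1 : ℝ) ^ (i - 1)
          / (q ^ (i * (i - 1)) * qPoch (q ^ (-2 : ℤ)) (q ^ (-2 : ℤ)) (m - i)) := by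
  have hp : |q⁻¹ ^ 2| ≠ 1 := by
    rwa [inv_pow, abs_inv, inv_ne_one, abs_pow, Ne, pow_eq_one_iff_of_nonneg (abs_nonneg q)
      two_ne_zero]
  have hQ : q ^ (-2 : ℤ) = q⁻¹ ^ 2 := by
    rw [zpow_neg, zpow_ofNat, inv_pow]
  calc
    _ = ∑ lam : (2 * m).Partition, (1 - q⁻¹ ^ lam.parts.card) * jordanWeight q⁻¹ 0 lam := by
      refine Finset.sum_congr rfl fun lam _ ↦ ?_
      rw [jordanWeight_inv, colLen_one, Real.rpow_neg_natCast, zpow_neg, zpow_natCast, inv_pow,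
        mul_ite, mul_zero, mul_one_div]
    _ = q⁻¹ ^ m * ∑ i ∈ Finset.range m, (-1) ^ i * (q⁻¹ ^ 2) ^ (i + 1).choose 2 *
          (qPoch (q⁻¹ ^ 2) (q⁻¹ ^ 2) (m - (i + 1)))⁻¹ := by
      rw [sum_one_sub_pow_card_mul_jordanWeight, sum_one_sub_pow_mul_jordanSum hp]
    _ = _ := by
      rw [sum_Icc_eq_sum_range, hQ, inv_pow, one_div]
      congr 1
      refine Finset.sum_congr rfl fun i _ ↦ ?_
      rw [Nat.add_sub_cancel, ← pow_mul, Nat.choose_two_right,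
        Nat.mul_div_cancel' (Nat.even_mul_pred_self (i + 1)).two_dvd, Nat.add_sub_cancel, inv_pow]
      field_simp

open Classical in
/-- Anzanello's third conjecture. -/
theorem anzanello_third_conjecture (q : ℝ) (hq : 1 < q) (m : ℕ) (hm : 1 ≤ m) :
    (∑ lam : Nat.Partition (2 * m),
      if ∀ i, Even i → Even (lam.parts.count i) then
        (1 - q ^ (-(colLen lam 1 : ℝ))) /
          (q ^ ((((∑ i ∈ Finset.Icc 1 (2 * m), ((colLen lam i : ℝ)) ^ 2))
                - (numOddParts lam : ℝ)) / 2)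
            * ∏ i ∈ Finset.Icc 1 (2 * m),
                qPoch (q ^ (-2 : ℤ)) (q ^ (-2 : ℤ)) (lam.parts.count i / 2))
      else 0)
    = 1 / q ^ m * ∑ i ∈ Finset.Icc 1 m,
        (-1 : ℝ) ^ (i - 1)
          / (q ^ (i * (i - 1)) * qPoch (q ^ (-2 : ℤ)) (q ^ (-2 : ℤ)) (m - i)) :=
  anzanello_third_conjecture_general q (by positivity) (hq.trans_le (le_abs_self q)).ne' m
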